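/- arXiv:2506.22578 — 2 statements merged into one kernel-verified Lean document; each statement's English description precedes it below -/
import Mathlib

section
/- Let Y be a nonempty finite type, s : Y → ℝ logits, softmax(s)(y) = exp(s(y)) / Σ_{y'} exp(s(y')). Fix y* ∈ Y and probability weights p, q : Y → ℝ with p(y*) = 0 and q(y*) = 0. Let L ≥ 0 and let G : Y → ℝ → ℝ be such that for every y, the function G(y) is differentiable on ℝ with |(G(y))'(t)| ≤ L for all t. For t ∈ ℝ define s_t(y) = s(y) + t·[y = y*], T_t(y) = G(y)(log softmax(s_t)(y)), and F(t) = Σ_y p(y)·T_t(y) − log( Σ_y q(y)·exp(T_t(y)) ). Then |F'(0)| ≤ 2·L·softmax(s)(y*). (DV/MINE Starvation Theorem Pro: the directional derivative of the DV objective along the logit of y* decays at least linearly in softmax(s)(y*) for Lipschitz critics.) -/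
open Real Finset

/-- Softmax over a finite type: `softmax s y = exp (s y) / ∑ y', exp (s y')`. -/
noncomputable def softmax {Y : Type*} [Fintype Y] (s : Y → ℝ) (y : Y) : ℝ :=
  Real.exp (s y) / ∑ y', Real.exp (s y')

/-! The derivative of the objective is the difference of the means of `∂T` under `p` and under the
Gibbs weights of `q`, both of which ignore `y*`. For `y ≠ y*` the logit of `y*` enters `T y` only
through the log-partition function, whose derivative is `softmax s y*`; hence
`|∂T y| ≤ L * softmax s y*`, and each of the two means contributes this much. -/

section WeightedSums

variable {Y : Type*} [Fintype Y]

theorem abs_sum_mul_le_sum_abs_mul {w a : Y → ℝ} {B : ℝ} (ha : ∀ y, w y ≠ 0 → |a y| ≤ B) :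
    |∑ y, w y * a y| ≤ (∑ y, |w y|) * B := by
  rw [sum_mul]
  refine (abs_sum_le_sum_abs _ _).trans (sum_le_sum fun y _ => ?_)
  rw [abs_mul]
  by_cases hw : w y = 0
  · simp [hw]
  · exact mul_le_mul_of_nonneg_left (ha y hw) (abs_nonneg _)

theorem hasDerivAt_sum_mul {w : Y → ℝ} {T : ℝ → Y → ℝ} {T' : Y → ℝ} {t₀ : ℝ}
    (hT : ∀ y, w y ≠ 0 → HasDerivAt (fun t => T t y) (T' y) t₀) :
    HasDerivAt (fun t => ∑ y, w y * T t y) (∑ y, w y * T' y) t₀ := by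
  refine HasDerivAt.fun_sum fun y _ => ?_
  by_cases hw : w y = 0
  · simpa only [hw, zero_mul] using hasDerivAt_const t₀ (0 : ℝ)
  · exact (hT y hw).const_mul (w y)

theorem sum_mul_exp_pos {q : Y → ℝ} (hq : 0 < q) (T : Y → ℝ) : 0 < ∑ y, q y * exp (T y) := by
  obtain ⟨hq_nonneg, y, hy⟩ := Pi.lt_def.1 hq
  exact Fintype.sum_pos (Pi.lt_def.2
    ⟨fun z => mul_nonneg (hq_nonneg z) (exp_pos _).le, y, mul_pos hy (exp_pos _)⟩)

end WeightedSums

/-- The weights `q` exponentially tilted by `T` and normalised to total mass one: the Gibbs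
measure with reference weights `q`. They occur as the derivative of `log ∑ y, q y * exp (T y)`
with respect to `T`, and `softmax` is the case `q = 1`. -/
noncomputable def gibbsWeight {Y : Type*} [Fintype Y] (q T : Y → ℝ) (y : Y) : ℝ :=
  q y * exp (T y) / ∑ z, q z * exp (T z)

section GibbsWeight

variable {Y : Type*} [Fintype Y]

theorem gibbsWeight_nonneg {q : Y → ℝ} (hq : 0 ≤ q) (T : Y → ℝ) (y : Y) :
    0 ≤ gibbsWeight q T y :=
  div_nonneg (mul_nonneg (hq y) (exp_pos _).le)
    (sum_nonneg fun z _ => mul_nonneg (hq z) (exp_pos _).le)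

theorem sum_gibbsWeight {q : Y → ℝ} (hq : 0 < q) (T : Y → ℝ) : ∑ y, gibbsWeight q T y = 1 := by
  simp only [gibbsWeight, ← sum_div]
  exact div_self (sum_mul_exp_pos hq T).ne'

theorem gibbsWeight_one (s : Y → ℝ) : gibbsWeight 1 s = softmax s := by
  ext y
  simp only [gibbsWeight, softmax, Pi.one_apply, one_mul]

theorem softmax_nonneg (s : Y → ℝ) (y : Y) : 0 ≤ softmax s y :=
  gibbsWeight_one s ▸ gibbsWeight_nonneg zero_le_one s y

theorem hasDerivAt_log_sum_mul_exp {q : Y → ℝ} {T : ℝ → Y → ℝ} {T' : Y → ℝ} {t₀ : ℝ}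
    (hq : 0 < q) (hT : ∀ y, q y ≠ 0 → HasDerivAt (fun t => T t y) (T' y) t₀) :
    HasDerivAt (fun t => log (∑ y, q y * exp (T t y)))
      (∑ y, gibbsWeight q (T t₀) y * T' y) t₀ := by
  have hsum : HasDerivAt (fun t => ∑ y, q y * exp (T t y))
      (∑ y, q y * (exp (T t₀ y) * T' y)) t₀ :=
    hasDerivAt_sum_mul fun y hy => (hT y hy).exp
  refine (hsum.log (sum_mul_exp_pos hq _).ne').congr_deriv ?_
  simp only [gibbsWeight, sum_div, div_mul_eq_mul_div, mul_assoc]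

end GibbsWeight

section LogSoftmax

variable {Y : Type*} [Fintype Y]

theorem log_softmax (s : Y → ℝ) (y : Y) : log (softmax s y) = s y - log (∑ z, exp (s z)) := by
  have hZ : 0 < ∑ z, exp (s z) := sum_pos (fun z _ => exp_pos (s z)) ⟨y, mem_univ y⟩
  rw [softmax, log_div (exp_pos _).ne' hZ.ne', log_exp]

theorem hasDerivAt_log_softmax {u : ℝ → Y → ℝ} {u' : Y → ℝ} {t₀ : ℝ}
    (hu : ∀ y, HasDerivAt (fun t => u t y) (u' y) t₀) (y : Y) :
    HasDerivAt (fun t => log (softmax (u t) y)) (u' y - ∑ z, softmax (u t₀) z * u' z) t₀ := by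
  have : Nonempty Y := ⟨y⟩
  have hZ : HasDerivAt (fun t => log (∑ z, exp (u t z))) (∑ z, softmax (u t₀) z * u' z) t₀ := by
    simpa only [gibbsWeight_one, Pi.one_apply, one_mul] using
      hasDerivAt_log_sum_mul_exp (q := 1) zero_lt_one fun z _ => hu z
  simpa only [log_softmax] using (hu y).fun_sub hZ

theorem hasDerivAt_log_softmax_add_mul_ite [DecidableEq Y] (s : Y → ℝ) (ystar y : Y) :
    HasDerivAt (fun t : ℝ => log (softmax (fun z => s z + t * (if z = ystar then 1 else 0)) y))
      ((if y = ystar then 1 else 0) - softmax s ystar) 0 := by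
  have hlogit : ∀ z, HasDerivAt (fun t : ℝ => s z + t * (if z = ystar then 1 else 0))
      (if z = ystar then 1 else 0) 0 := fun z =>
    (hasDerivAt_mul_const _).const_add (s z)
  simpa using hasDerivAt_log_softmax hlogit y

end LogSoftmax

/-- The Donsker–Varadhan objective `E_p[T] - log E_q[exp T]` of a critic `T`. For probability
weights `p` and `q`, its supremum over `T` is the Kullback–Leibler divergence of `p` from `q`; here
they may be arbitrary. -/
noncomputable def dvObjective {Y : Type*} [Fintype Y] (p q T : Y → ℝ) : ℝ :=
  ∑ y, p y * T y - log (∑ y, q y * exp (T y))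

section DVObjective

variable {Y : Type*} [Fintype Y] {p q : Y → ℝ}

theorem hasDerivAt_dvObjective {T : ℝ → Y → ℝ} {T' : Y → ℝ} {t₀ : ℝ} (hq : 0 < q)
    (hT : ∀ y, p y ≠ 0 ∨ q y ≠ 0 → HasDerivAt (fun t => T t y) (T' y) t₀) :
    HasDerivAt (fun t => dvObjective p q (T t))
      (∑ y, p y * T' y - ∑ y, gibbsWeight q (T t₀) y * T' y) t₀ :=
  (hasDerivAt_sum_mul fun y hy => hT y (.inl hy)).fun_sub
    (hasDerivAt_log_sum_mul_exp hq fun y hy => hT y (.inr hy))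

theorem abs_deriv_dvObjective_le {T : ℝ → Y → ℝ} {T' : Y → ℝ} {t₀ B : ℝ} (hq : 0 < q)
    (hT : ∀ y, p y ≠ 0 ∨ q y ≠ 0 → HasDerivAt (fun t => T t y) (T' y) t₀)
    (hB : ∀ y, p y ≠ 0 ∨ q y ≠ 0 → |T' y| ≤ B) :
    |deriv (fun t => dvObjective p q (T t)) t₀| ≤ (∑ y, |p y| + 1) * B := by
  have hp_mean : |∑ y, p y * T' y| ≤ (∑ y, |p y|) * B :=
    abs_sum_mul_le_sum_abs_mul fun y hy => hB y (.inl hy)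
  have hq_mean : |∑ y, gibbsWeight q (T t₀) y * T' y| ≤ B := by
    have hbound : ∀ y, gibbsWeight q (T t₀) y ≠ 0 → |T' y| ≤ B := fun y hy =>
      hB y (.inr fun hqy => hy (by simp [gibbsWeight, hqy]))
    simpa only [abs_of_nonneg (gibbsWeight_nonneg hq.le _ _), sum_gibbsWeight hq, one_mul] using
      abs_sum_mul_le_sum_abs_mul hbound
  rw [(hasDerivAt_dvObjective hq hT).deriv, add_one_mul]
  exact (abs_sub _ _).trans (add_le_add hp_mean hq_mean)

end DVObjective

theorem dv_mine_starvation_pro_general {Y : Type*} [Fintype Y] [DecidableEq Y]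
    (s : Y → ℝ) (ystar : Y) (p q : Y → ℝ) (hq : 0 < q)
    (hpstar : p ystar = 0) (hqstar : q ystar = 0) (L : ℝ) (G : Y → ℝ → ℝ)
    (hGdiff : ∀ y, y ≠ ystar → DifferentiableAt ℝ (G y) (log (softmax s y)))
    (hGlip : ∀ y, y ≠ ystar → |deriv (G y) (log (softmax s y))| ≤ L) :
    |deriv (fun t : ℝ => dvObjective p q fun y =>
        G y (log (softmax (fun y' => s y' + t * (if y' = ystar then 1 else 0)) y))) 0|
      ≤ (∑ y, |p y| + 1) * (L * softmax s ystar) := by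
  have hne : ∀ y, p y ≠ 0 ∨ q y ≠ 0 → y ≠ ystar := by
    rintro y hy rfl
    exact hy.elim (· hpstar) (· hqstar)
  refine abs_deriv_dvObjective_le (T' := fun y => deriv (G y) (log (softmax s y)) *
    -softmax s ystar) hq (fun y hy => ?_) (fun y hy => ?_)
  · have hlog := hasDerivAt_log_softmax_add_mul_ite s ystar y
    rw [if_neg (hne y hy), zero_sub] at hlog
    exact (hGdiff y (hne y hy)).hasDerivAt.comp_of_eq 0 hlog (by simp)
  · rw [abs_mul, abs_neg, abs_of_nonneg (softmax_nonneg s ystar)]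
    exact mul_le_mul_of_nonneg_right (hGlip y (hne y hy)) (softmax_nonneg s ystar)

/-- **DV/MINE Starvation Theorem Pro.** For critics of the form
`T(y) = G(y, log softmax(s)(y))` with `G` differentiable and `L`-Lipschitz in the second
argument, if `p` and `q` assign zero mass to `y*`, then the derivative of the DV
objective along the logit of `y*` is bounded by `2 · L · softmax(s)(y*)`. -/
theorem dv_mine_starvation_pro {Y : Type*} [Fintype Y] [Nonempty Y] [DecidableEq Y]
    (s : Y → ℝ) (ystar : Y)
    (p q : Y → ℝ)
    (hp0 : ∀ y, 0 ≤ p y) (hp1 : ∑ y, p y = 1)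
    (hq0 : ∀ y, 0 ≤ q y) (hq1 : ∑ y, q y = 1)
    (hpstar : p ystar = 0) (hqstar : q ystar = 0)
    (L : ℝ) (hL : 0 ≤ L)
    (G : Y → ℝ → ℝ)
    (hGdiff : ∀ y, Differentiable ℝ (G y))
    (hGlip : ∀ y t, |deriv (G y) t| ≤ L) :
    |deriv (fun t : ℝ =>
      (∑ y, p y *
        G y (Real.log (softmax (fun y' => s y' + t * (if y' = ystar then 1 else 0)) y)))
      - Real.log (∑ y, q y *
          Real.exp (G y
            (Real.log (softmax (fun y' => s y' + t * (if y' = ystar then 1 else 0)) y)))))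
      0| ≤ 2 * L * softmax s ystar := by
  have hq : 0 < q := (Fintype.sum_pos_iff_of_nonneg hq0).1 (hq1 ▸ zero_lt_one)
  simpa only [dvObjective, abs_of_nonneg (hp0 _), hp1, one_add_one_eq_two, ← mul_assoc] using
    dv_mine_starvation_pro_general s ystar p q hq hpstar hqstar L G
      (fun y _ => (hGdiff y).differentiableAt) (fun y _ => hGlip y _)
end

section
/- Let Y be a nonempty finite type, and let p, q, ρ : Y → ℝ be probability weights with q(y) > 0 whenever p(y) > 0. Define the mixture q̄(y) = (1/2)·(q(y) + ρ(y)). Then for every function T : Y → ℝ, Σ_y p(y)·T(y) − log( 2·Σ_y q̄(y)·exp(T(y)) ) ≤ Σ_{y : p(y) > 0} p(y)·log( p(y)/q(y) ). (Modified DV bound (C.1)/Equation (5): replacing the negative-sample distribution by twice the chosen–rejection mixture still lower-bounds the KL divergence, since Σ_y q(y)e^{T(y)} ≤ 2·Σ_y q̄(y)e^{T(y)}.) -/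
open Real Finset

/-!
For nonnegative weights `r` of any total mass, the Donsker–Varadhan bound
`∑ pT - log ∑ r e^T ≤ ∑ p log (p / r)` is the log-sum inequality for `p` against `r e^T`, that is,
Jensen's inequality for `x log x` at the points `p / (r e^T)` with weights `r e^T`. Take
`r = 2q̄ = q + ρ`: since `q ≤ r`, the right-hand side is at most `∑ p log (p / q)`.
-/

section FiniteWeights

variable {ι : Type*} {s : Finset ι} {p q r : ι → ℝ}

theorem sum_mul_log_sum_div_sum_le (hp : ∀ i ∈ s, 0 ≤ p i) (hq : ∀ i ∈ s, 0 ≤ q i)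
    (hpq : ∀ i ∈ s, q i = 0 → p i = 0) :
    (∑ i ∈ s, p i) * log ((∑ i ∈ s, p i) / ∑ i ∈ s, q i) ≤ ∑ i ∈ s, p i * log (p i / q i) := by
  obtain hQ | hQ := (sum_nonneg hq).eq_or_lt'
  · have hp_zero : ∀ i ∈ s, p i = 0 := fun i hi =>
      hpq i hi ((sum_eq_zero_iff_of_nonneg hq).1 hQ i hi)
    rw [sum_eq_zero hp_zero, zero_mul, sum_eq_zero fun i hi => by rw [hp_zero i hi, zero_mul]]
  · have cancel : ∀ i ∈ s, q i * (p i / q i) = p i := fun i hi =>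
      mul_div_cancel_of_imp' (hpq i hi)
    have hp_centerMass : s.centerMass q (fun i => p i / q i) = (∑ i ∈ s, p i) / ∑ i ∈ s, q i := by
      simp only [centerMass, smul_eq_mul, sum_congr rfl cancel, inv_mul_eq_div]
    have hlog_centerMass : s.centerMass q (fun i => p i / q i * log (p i / q i)) =
        (∑ i ∈ s, p i * log (p i / q i)) / ∑ i ∈ s, q i := by
      rw [centerMass, smul_eq_mul, inv_mul_eq_div]
      congr 1
      exact sum_congr rfl fun i hi => by rw [smul_eq_mul, ← mul_assoc, cancel i hi]
    have jensen := convexOn_mul_log.map_centerMass_le hq hQ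
      fun i hi => Set.mem_Ici.2 (div_nonneg (hp i hi) (hq i hi))
    rwa [Function.comp_def, hp_centerMass, hlog_centerMass, div_mul_eq_mul_div,
      div_le_div_iff_of_pos_right hQ] at jensen

theorem mul_log_div_mul_exp {a b : ℝ} (hab : b = 0 → a = 0) (t : ℝ) :
    a * log (a / (b * exp t)) = a * log (a / b) - a * t := by
  obtain rfl | ha := eq_or_ne a 0
  · simp only [zero_mul, sub_zero]
  · rw [← div_div, log_div (div_ne_zero ha (mt hab ha)) (exp_ne_zero t), log_exp, mul_sub]

theorem sum_mul_sub_log_sum_mul_exp_le (hp : ∀ i ∈ s, 0 ≤ p i) (hp_sum : ∑ i ∈ s, p i = 1)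
    (hr : ∀ i ∈ s, 0 ≤ r i) (hpr : ∀ i ∈ s, r i = 0 → p i = 0) (T : ι → ℝ) :
    ∑ i ∈ s, p i * T i - log (∑ i ∈ s, r i * exp (T i)) ≤ ∑ i ∈ s, p i * log (p i / r i) := by
  have log_sum : -log (∑ i ∈ s, r i * exp (T i)) ≤
      ∑ i ∈ s, p i * log (p i / (r i * exp (T i))) := by
    simpa only [hp_sum, one_mul, one_div, log_inv] using
      sum_mul_log_sum_div_sum_le hp (fun i hi => mul_nonneg (hr i hi) (exp_pos (T i)).le)
        fun i hi h => hpr i hi ((mul_eq_zero_iff_right (exp_ne_zero (T i))).1 h)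
  rw [sum_congr rfl fun i hi => mul_log_div_mul_exp (hpr i hi) (T i), sum_sub_distrib] at log_sum
  linarith

theorem mul_log_div_le_mul_log_div {a b c : ℝ} (ha : 0 ≤ a) (hab : 0 < a → 0 < b) (hbc : b ≤ c) :
    a * log (a / c) ≤ a * log (a / b) := by
  obtain rfl | ha := ha.eq_or_lt'
  · simp only [zero_mul, le_refl]
  · have hb : 0 < b := hab ha
    have hc : 0 < c := hb.trans_le hbc
    gcongr

theorem sum_filter_pos_mul (hp : ∀ i ∈ s, 0 ≤ p i) (f : ι → ℝ) :
    ∑ i ∈ s with 0 < p i, p i * f i = ∑ i ∈ s, p i * f i :=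
  sum_filter_of_ne fun i hi h => (hp i hi).lt_of_ne' (left_ne_zero_of_mul h)

theorem modified_dv_bound_general (hp : ∀ i ∈ s, 0 ≤ p i) (hp_sum : ∑ i ∈ s, p i = 1)
    (hq : ∀ i ∈ s, 0 ≤ q i) (hpq : ∀ i ∈ s, 0 < p i → 0 < q i) (hqr : ∀ i ∈ s, q i ≤ r i)
    (T : ι → ℝ) :
    ∑ i ∈ s, p i * T i - log (∑ i ∈ s, r i * exp (T i)) ≤
      ∑ i ∈ s with 0 < p i, p i * log (p i / q i) := by
  have hr : ∀ i ∈ s, 0 ≤ r i := fun i hi => (hq i hi).trans (hqr i hi)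
  have hpr : ∀ i ∈ s, r i = 0 → p i = 0 := fun i hi hri =>
    (hp i hi).eq_of_not_lt' fun hpi => ((hpq i hi hpi).trans_le (hqr i hi)).ne' hri
  calc ∑ i ∈ s, p i * T i - log (∑ i ∈ s, r i * exp (T i))
    _ ≤ ∑ i ∈ s, p i * log (p i / r i) :=
      sum_mul_sub_log_sum_mul_exp_le hp hp_sum hr hpr T
    _ ≤ ∑ i ∈ s, p i * log (p i / q i) := sum_le_sum fun i hi =>
      mul_log_div_le_mul_log_div (hp i hi) (hpq i hi) (hqr i hi)
    _ = ∑ i ∈ s with 0 < p i, p i * log (p i / q i) := (sum_filter_pos_mul hp _).symm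

end FiniteWeights

/-- **Modified DV bound (C.1).** For probability weights `p`, `q`, `ρ` on a finite type
with `p ≪ q`, and the mixture `q̄ = ½(q + ρ)`, for every critic `T`:
`Σ_y p(y)·T(y) − log (2·Σ_y q̄(y)·e^{T(y)}) ≤ KL(p‖q)`. -/
theorem modified_dv_bound {Y : Type*} [Fintype Y] [Nonempty Y]
    (p q ρ : Y → ℝ)
    (hp0 : ∀ y, 0 ≤ p y) (hp1 : ∑ y, p y = 1)
    (hq0 : ∀ y, 0 ≤ q y) (hq1 : ∑ y, q y = 1)
    (hρ0 : ∀ y, 0 ≤ ρ y) (hρ1 : ∑ y, ρ y = 1)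
    (hac : ∀ y, 0 < p y → 0 < q y)
    (T : Y → ℝ) :
    (∑ y, p y * T y) -
        Real.log (2 * ∑ y, (1 / 2) * (q y + ρ y) * Real.exp (T y)) ≤
      ∑ y ∈ Finset.univ.filter (fun y => 0 < p y), p y * Real.log (p y / q y) := by
  have hqr : ∀ y, q y ≤ 2 * (1 / 2 * (q y + ρ y)) := fun y => by linarith [hρ0 y]
  simpa only [mul_sum, mul_assoc] using modified_dv_bound_general (fun y _ => hp0 y) hp1
    (fun y _ => hq0 y) (fun y _ => hac y) (fun y _ => hqr y) T
end
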